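/- Let R be a pseudo-valuation domain issued from (V, M, k), i.e., R = φ⁻¹(k) where (V, M) is a valuation domain with residue field K = V/M, φ : V → K the quotient map, and k a subfield of K. Let a be a nonzero element of M, and W a k-vector subspace of K with k ⊊ W ⊊ K. Set I := a·φ⁻¹(W). Then for every r ≥ 1, the divisorial closure satisfies (I^r)_v = a^r·V. -/

import Mathlib

/-!
Write `φ : V → K` for the residue map, so that `R = φ⁻¹(k)`, `V = φ⁻¹(K)` and `M = φ⁻¹(0)`.
Forming `φ⁻¹(W)` for a `k`-subspace `W` of `K` commutes with the products of nonzero subspaces,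
because `φ⁻¹(W)` then contains a unit of `V`. It also commutes with the inverse,
`(R : φ⁻¹(W)) = φ⁻¹((k : W))`: as `V` is a valuation domain and `k ≠ K`, an `x` with `x M ⊆ R` lies
in `V`. If `k ⊊ W`, then `k ⊊ W ^ r`, hence `(k : W ^ r) = 0` and `(W ^ r)_v = K`. Pulling this back
along `φ` and rescaling by `a ^ r` gives the claim.
-/

open scoped nonZeroDivisors

/-- The `v`-operation (divisorial closure) on `R`-submodules of the fraction field `K`:
`I_v = (I⁻¹)⁻¹` where `I⁻¹ = (R : I) = 1 / I`. -/
noncomputable def vS (R K : Type*) [CommRing R] [Field K] [Algebra R K]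
    (I : Submodule R K) : Submodule R K := 1 / (1 / I)

/-- The `t`-operation: `I_t = ⋃ J_v` where `J` ranges over nonzero finitely generated
sub-ideals of `I`. -/
noncomputable def tS (R K : Type*) [CommRing R] [Field K] [Algebra R K]
    (I : Submodule R K) : Submodule R K :=
  ⨆ J ∈ {J : Submodule R K | J ≠ ⊥ ∧ J.FG ∧ J ≤ I}, vS R K J

/-- The image of an ideal of `R` in the fraction field `K`, as an `R`-submodule. -/
noncomputable def idealToSub (R K : Type*) [CommRing R] [Field K] [Algebra R K]
    (I : Ideal R) : Submodule R K := Submodule.map (Algebra.linearMap R K) I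

/-- The `t`-closure of an ideal of `R`, computed in the fraction field `K`. -/
noncomputable def tI (R K : Type*) [CommRing R] [Field K] [Algebra R K]
    (I : Ideal R) : Submodule R K := tS R K (idealToSub R K I)

/-- The `v`-closure of an ideal of `R`, computed in the fraction field `K`. -/
noncomputable def vI (R K : Type*) [CommRing R] [Field K] [Algebra R K]
    (I : Ideal R) : Submodule R K := vS R K (idealToSub R K I)

open IsLocalRing

section Submodule

variable {R K : Type*} [CommRing R] [Field K] [Algebra R K]

theorem one_div_span_singleton_mul {c : K} (hc : c ≠ 0) (J : Submodule R K) :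
    1 / (Submodule.span R {c} * J) = Submodule.span R {c⁻¹} * (1 / J) := by
  ext x
  simp only [Submodule.mem_div_iff_forall_mul_mem, Submodule.mem_span_singleton_mul]
  constructor
  · intro hx
    refine ⟨c * x, fun y hy ↦ ?_, inv_mul_cancel_left₀ hc x⟩
    rw [mul_comm c, mul_assoc]
    exact hx _ ⟨y, hy, rfl⟩
  · rintro ⟨z, hz, rfl⟩ _ ⟨y, hy, rfl⟩
    rw [mul_mul_mul_comm, inv_mul_cancel₀ hc, one_mul]
    exact hz y hy

theorem vS_span_singleton_mul {c : K} (hc : c ≠ 0) (J : Submodule R K) :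
    vS R K (Submodule.span R {c} * J) = Submodule.span R {c} * vS R K J := by
  rw [vS, one_div_span_singleton_mul hc, one_div_span_singleton_mul (inv_ne_zero hc), inv_inv, vS]

theorem idealToSub_pow (I : Ideal R) (n : ℕ) :
    idealToSub R K (I ^ n) = idealToSub R K I ^ n :=
  Submodule.map_pow I (Algebra.ofId R K) n

end Submodule

section Subspace

variable {k K : Type*} [Field k] [Field K] [Algebra k K] {W : Submodule k K}

theorem one_div_eq_bot_of_one_lt (hW : 1 < W) : 1 / W = ⊥ := by
  refine (Submodule.eq_bot_iff _).2 fun x hx ↦ by_contra fun hx0 ↦ hW.not_ge fun w hw ↦ ?_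
  obtain ⟨d, hd⟩ := Submodule.mem_one.1 (hx 1 (Submodule.one_le.1 hW.le))
  obtain ⟨e, he⟩ := Submodule.mem_one.1 (hx w hw)
  refine Submodule.mem_one.2 ⟨e / d, ?_⟩
  rw [map_div₀, hd, he, mul_one, mul_div_cancel_left₀ w hx0]

theorem vS_eq_top_of_one_lt (hW : 1 < W) : vS k K W = ⊤ := by
  rw [vS, one_div_eq_bot_of_one_lt hW, eq_top_iff]
  rintro x - y hy
  rw [(Submodule.mem_bot k).1 hy, mul_zero]
  exact zero_mem _

theorem coe_one_submodule_subfield (F : Subfield K) : ((1 : Submodule F K) : Set K) = F := by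
  rw [Submodule.one_eq_range, LinearMap.coe_range]
  exact Subtype.range_coe

end Subspace

section ResiduePreimage

variable {V : Type*} [CommRing V] [IsLocalRing V]

/-- The subring `φ⁻¹(k)` of a local ring `V`, where `φ` is the residue map and `k` a subfield of the
residue field. For a valuation domain `V` this is the pseudo-valuation domain issued from
`(V, M, k)`. -/
abbrev pseudoValuationSubring (k : Subfield (ResidueField V)) : Subring V :=
  k.toSubring.comap (residue V)

variable {k : Subfield (ResidueField V)}

/-- The preimage `φ⁻¹(W)` of a `k`-subspace `W` of the residue field, as a `φ⁻¹(k)`-submodule of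
the local ring `V`. -/
def residuePreimage (W : Submodule k (ResidueField V)) :
    Submodule (pseudoValuationSubring k) V where
  carrier := residue V ⁻¹' W
  zero_mem' := by simp
  add_mem' hx hy := by simpa using add_mem hx hy
  smul_mem' c x hx := by
    rw [Set.mem_preimage, Subring.smul_def, smul_eq_mul, map_mul]
    exact W.smul_mem ⟨residue V c, c.2⟩ hx

variable {W W' : Submodule k (ResidueField V)}

theorem mem_residuePreimage {x : V} : x ∈ residuePreimage W ↔ residue V x ∈ W :=
  Iff.rfl

theorem residuePreimage_one :
    residuePreimage (1 : Submodule k (ResidueField V)) = 1 := by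
  ext x
  rw [mem_residuePreimage, ← SetLike.mem_coe, coe_one_submodule_subfield, SetLike.mem_coe,
    Submodule.mem_one]
  constructor
  · exact fun hx ↦ ⟨⟨x, hx⟩, rfl⟩
  · rintro ⟨y, rfl⟩
    exact y.2

theorem mem_residuePreimage_of_mem_maximalIdeal {x : V} (hx : x ∈ maximalIdeal V) :
    x ∈ residuePreimage W := by
  rw [mem_residuePreimage, (residue_eq_zero_iff x).2 hx]
  exact zero_mem W

theorem exists_unit_mem_residuePreimage (hW : W ≠ ⊥) : ∃ u : Vˣ, (u : V) ∈ residuePreimage W := by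
  obtain ⟨w, hwW, hw0⟩ := W.ne_bot_iff.1 hW
  obtain ⟨u, rfl⟩ := residue_surjective w
  exact ⟨((residue_ne_zero_iff_isUnit u).1 hw0).unit, hwW⟩

theorem mem_residuePreimage_mul_of_mem_maximalIdeal (hW : W ≠ ⊥) {x : V}
    (hx : x ∈ maximalIdeal V) : x ∈ residuePreimage W * residuePreimage W' := by
  obtain ⟨u, hu⟩ := exists_unit_mem_residuePreimage hW
  rw [← u.mul_inv_cancel_left x]
  exact Submodule.mul_mem_mul hu
    (mem_residuePreimage_of_mem_maximalIdeal (Ideal.mul_mem_left _ _ hx))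

theorem exists_mem_residuePreimage_mul_residue_eq {z : ResidueField V} (hz : z ∈ W * W') :
    ∃ y ∈ residuePreimage W * residuePreimage W', residue V y = z := by
  induction hz using Submodule.mul_induction_on' with
  | mem_mul_mem w hw w' hw' =>
    obtain ⟨x, rfl⟩ := residue_surjective w
    obtain ⟨x', rfl⟩ := residue_surjective w'
    exact ⟨x * x', Submodule.mul_mem_mul hw hw', map_mul _ x x'⟩
  | add _ _ _ _ hz hz' =>
    obtain ⟨y, hy, rfl⟩ := hz
    obtain ⟨y', hy', rfl⟩ := hz'
    exact ⟨y + y', add_mem hy hy', map_add _ y y'⟩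

theorem residuePreimage_mul (hW : W ≠ ⊥) :
    residuePreimage (W * W') = residuePreimage W * residuePreimage W' := by
  refine le_antisymm (fun x hx ↦ ?_) (Submodule.mul_le.2 fun x hx y hy ↦ ?_)
  · obtain ⟨y, hy, hyx⟩ := exists_mem_residuePreimage_mul_residue_eq hx
    have hxy : x - y ∈ maximalIdeal V := by
      rw [← residue_eq_zero_iff, map_sub, hyx, sub_self]
    simpa only [sub_add_cancel] using
      add_mem (mem_residuePreimage_mul_of_mem_maximalIdeal hW hxy) hy
  · rw [mem_residuePreimage, map_mul]
    exact Submodule.mul_mem_mul hx hy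

theorem residuePreimage_pow (hW : W ≠ ⊥) (n : ℕ) :
    residuePreimage (W ^ n) = residuePreimage W ^ n := by
  induction n with
  | zero => rw [pow_zero, pow_zero, residuePreimage_one]
  | succ n ih => rw [pow_succ', pow_succ', residuePreimage_mul hW, ih]

end ResiduePreimage

section FractionField

variable {V : Type*} [CommRing V] [IsLocalRing V] {k : Subfield (ResidueField V)}
  (Q : Type*) [Field Q] [Algebra V Q]
  [Algebra (pseudoValuationSubring k) Q] [IsScalarTower (pseudoValuationSubring k) V Q]

/-- The image of `φ⁻¹(W)` in an extension field `Q` of `V`, usually the fraction field, where the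
inverses and the `v`-operation are formed. -/
noncomputable def fractionalResiduePreimage (W : Submodule k (ResidueField V)) :
    Submodule (pseudoValuationSubring k) Q :=
  (residuePreimage W).map (IsScalarTower.toAlgHom (pseudoValuationSubring k) V Q).toLinearMap

variable {Q} {W : Submodule k (ResidueField V)}

theorem mem_fractionalResiduePreimage {q : Q} :
    q ∈ fractionalResiduePreimage Q W ↔ ∃ y : V, residue V y ∈ W ∧ algebraMap V Q y = q :=
  Iff.rfl

theorem fractionalResiduePreimage_one :
    fractionalResiduePreimage Q (1 : Submodule k (ResidueField V)) = 1 := by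
  rw [fractionalResiduePreimage, residuePreimage_one, Submodule.map_one]

theorem fractionalResiduePreimage_pow (hW : W ≠ ⊥) (n : ℕ) :
    fractionalResiduePreimage Q (W ^ n) = fractionalResiduePreimage Q W ^ n := by
  rw [fractionalResiduePreimage, residuePreimage_pow hW, Submodule.map_pow,
    fractionalResiduePreimage]

theorem algebraMap_mem_one_iff [FaithfulSMul V Q] {y : V} :
    algebraMap V Q y ∈ (1 : Submodule (pseudoValuationSubring k) Q) ↔
      residue V y ∈ (1 : Submodule k (ResidueField V)) := by
  rw [← fractionalResiduePreimage_one, mem_fractionalResiduePreimage]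
  constructor
  · rintro ⟨z, hz, hzy⟩
    rwa [← FaithfulSMul.algebraMap_injective V Q hzy]
  · exact fun hy ↦ ⟨y, hy, rfl⟩

theorem idealToSub_eq_span_singleton_mul {a : V} (ha : a ∈ maximalIdeal V)
    {I : Ideal (pseudoValuationSubring k)}
    (hI : ∀ x : pseudoValuationSubring k, x ∈ I ↔ ∃ y : V, residue V y ∈ W ∧ (x : V) = a * y) :
    idealToSub (pseudoValuationSubring k) Q I =
      Submodule.span _ {algebraMap V Q a} * fractionalResiduePreimage Q W := by
  have hmap (x : pseudoValuationSubring k) :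
      algebraMap (pseudoValuationSubring k) Q x = algebraMap V Q x :=
    IsScalarTower.algebraMap_apply _ V Q x
  ext q
  rw [Submodule.mem_span_singleton_mul]
  constructor
  · rintro ⟨x, hx, rfl⟩
    obtain ⟨y, hy, hxy⟩ := (hI x).1 hx
    refine ⟨algebraMap V Q y, ⟨y, hy, rfl⟩, ?_⟩
    rw [Algebra.linearMap_apply, hmap, hxy, map_mul]
  · rintro ⟨_, ⟨y, hy, rfl⟩, rfl⟩
    have hay : residue V (a * y) ∈ k := by
      rw [(residue_eq_zero_iff _).2 (Ideal.mul_mem_right _ _ ha)]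
      exact k.zero_mem
    let x : pseudoValuationSubring k := ⟨a * y, hay⟩
    exact ⟨x, (hI x).2 ⟨y, hy, rfl⟩, (hmap x).trans (map_mul _ a y)⟩

end FractionField

section Valuation

variable {V : Type*} [CommRing V] [IsDomain V] [ValuationRing V] {k : Subfield (ResidueField V)}
  {Q : Type*} [Field Q] [Algebra V Q] [IsFractionRing V Q]
  [Algebra (pseudoValuationSubring k) Q] [IsScalarTower (pseudoValuationSubring k) V Q]

theorem isInteger_or_exists_mem_maximalIdeal_mul_eq_one (q : Q) :
    IsLocalization.IsInteger V q ∨ ∃ t ∈ maximalIdeal V, q * algebraMap V Q t = 1 := by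
  rcases eq_or_ne q 0 with rfl | hq0
  · exact .inl (IsLocalization.isInteger_zero)
  rcases ValuationRing.isInteger_or_isInteger V q with hq | ⟨t, ht⟩
  · exact .inl hq
  · by_cases htM : t ∈ maximalIdeal V
    · exact .inr ⟨t, htM, by rw [ht, mul_inv_cancel₀ hq0]⟩
    · obtain ⟨u, rfl⟩ := notMem_maximalIdeal.1 htM
      refine .inl ⟨(u⁻¹ : Vˣ), ?_⟩
      rw [map_units_inv, ht, inv_inv]

theorem isInteger_of_forall_mul_mem_one (hk : (1 : Submodule k (ResidueField V)) ≠ ⊤) {q : Q}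
    (hq : ∀ m ∈ maximalIdeal V,
      q * algebraMap V Q m ∈ (1 : Submodule (pseudoValuationSubring k) Q)) :
    IsLocalization.IsInteger V q := by
  refine (isInteger_or_exists_mem_maximalIdeal_mul_eq_one q).resolve_right ?_
  rintro ⟨t, htM, ht⟩
  refine hk ((Submodule.eq_top_iff').2 fun w ↦ ?_)
  obtain ⟨z, rfl⟩ := residue_surjective w
  have hz := hq (t * z) (Ideal.mul_mem_right _ _ htM)
  rw [map_mul, ← mul_assoc, ht, one_mul] at hz
  exact algebraMap_mem_one_iff.1 hz

theorem one_div_fractionalResiduePreimage (hk : (1 : Submodule k (ResidueField V)) ≠ ⊤)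
    (W : Submodule k (ResidueField V)) :
    1 / fractionalResiduePreimage Q W = fractionalResiduePreimage Q (1 / W) := by
  ext q
  constructor
  · intro hq
    obtain ⟨y, rfl⟩ := isInteger_of_forall_mul_mem_one hk fun m hm ↦
      hq _ ⟨m, mem_residuePreimage_of_mem_maximalIdeal hm, rfl⟩
    refine ⟨y, fun w hw ↦ ?_, rfl⟩
    obtain ⟨z, rfl⟩ := residue_surjective w
    rw [← map_mul, ← algebraMap_mem_one_iff (Q := Q), map_mul]
    exact hq _ ⟨z, hw, rfl⟩
  · rintro ⟨y, hy, rfl⟩ _ ⟨z, hz, rfl⟩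
    change algebraMap V Q y * algebraMap V Q z ∈ _
    rw [← map_mul, algebraMap_mem_one_iff, map_mul]
    exact hy _ hz

theorem vS_fractionalResiduePreimage (hk : (1 : Submodule k (ResidueField V)) ≠ ⊤)
    (W : Submodule k (ResidueField V)) :
    vS (pseudoValuationSubring k) Q (fractionalResiduePreimage Q W) =
      fractionalResiduePreimage Q (vS k (ResidueField V) W) := by
  rw [vS, one_div_fractionalResiduePreimage hk, one_div_fractionalResiduePreimage hk, vS]

theorem pvd_v_closure_of_power_general {W : Submodule k (ResidueField V)} (hW : 1 < W)
    {c : Q} (hc : c ≠ 0) {r : ℕ} (hr : r ≠ 0) :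
    vS (pseudoValuationSubring k) Q
        ((Submodule.span _ {c} * fractionalResiduePreimage Q W) ^ r) =
      Submodule.span _ {c ^ r} * fractionalResiduePreimage Q ⊤ := by
  have hWr : 1 < W ^ r := one_lt_pow₀ hW hr
  rw [mul_pow, Submodule.span_pow, Set.singleton_pow, vS_span_singleton_mul (pow_ne_zero r hc),
    ← fractionalResiduePreimage_pow (bot_le.trans_lt hW).ne',
    vS_fractionalResiduePreimage (hW.trans_le le_top).ne, vS_eq_top_of_one_lt hWr]

end Valuation

/-- Let `R = φ⁻¹(k)` be a pseudo-valuation domain issued from `(V, M, k)`, `0 ≠ a ∈ M` and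
`W` a `k`-subspace of `K = V/M` with `k ⊊ W ⊊ K`. For `I := a·φ⁻¹(W)`, the divisorial
closure satisfies `(I^r)_v = a^r·V` for every `r ≥ 1` (computed in the common quotient
field `Q` of `R` and `V`). -/
theorem pvd_v_closure_of_power (V : Type*) [CommRing V] [IsDomain V] [ValuationRing V]
    (k : Subfield (IsLocalRing.ResidueField V))
    (R : Subring V) (hR : R = Subring.comap (IsLocalRing.residue V) k.toSubring)
    (Q : Type*) [Field Q] [Algebra V Q] [IsFractionRing V Q]
    [Algebra ↥R Q] [IsScalarTower ↥R V Q]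
    (W : Submodule ↥k (IsLocalRing.ResidueField V))
    (hkW : (↑k : Set (IsLocalRing.ResidueField V)) ⊂ (↑W : Set (IsLocalRing.ResidueField V)))
    (hWK : (↑W : Set (IsLocalRing.ResidueField V)) ≠ Set.univ)
    (a : V) (haM : a ∈ IsLocalRing.maximalIdeal V) (ha0 : a ≠ 0)
    (I : Ideal ↥R)
    (hI : ∀ x : ↥R, x ∈ I ↔ ∃ y : V, IsLocalRing.residue V y ∈ W ∧ (x : V) = a * y)
    (r : ℕ) (hr : 1 ≤ r) :
    (↑(vS ↥R Q (idealToSub ↥R Q (I ^ r))) : Set Q)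
      = Set.range (fun v : V => algebraMap V Q (a ^ r * v)) := by
  obtain rfl : R = pseudoValuationSubring k := hR
  have hW : 1 < W := by rwa [← SetLike.coe_ssubset_coe, coe_one_submodule_subfield]
  have ha : algebraMap V Q a ≠ 0 := (FaithfulSMul.algebraMap_eq_zero_iff V Q).not.2 ha0
  rw [idealToSub_pow, idealToSub_eq_span_singleton_mul haM hI,
    pvd_v_closure_of_power_general hW ha (Nat.one_le_iff_ne_zero.1 hr)]
  ext q
  simp [Submodule.mem_span_singleton_mul, mem_fractionalResiduePreimage]
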